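/- Let G be a finite simple graph that is strongly regular with parameters (n, k, λ, μ) and assume 0 < μ. Then for every vertex w, the sum of distances from w satisfies, as rational numbers, Σ_v G.dist w v = deg(w) + 4·bc(w); equivalently, the closeness centrality satisfies cc(w) = (n−1)/(deg(w) + 4·bc(w)). -/

import Mathlib

namespace GT

/-- `numSP G u v`: the number of shortest paths between `u` and `v`, i.e. the number of
walks from `u` to `v` of length `G.dist u v`. -/
noncomputable def numSP {V : Type} [Fintype V] [DecidableEq V] (G : SimpleGraph V)
    [DecidableRel G.Adj] (u v : V) : ℕ :=
  (G.finsetWalkLength (G.dist u v) u v).card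

/-- `numSPvia G w u v`: the number of shortest paths between `u` and `v` having `w` as an
internal vertex (`w` lies on the walk's support and `w ≠ u`, `w ≠ v`). -/
noncomputable def numSPvia {V : Type} [Fintype V] [DecidableEq V] (G : SimpleGraph V)
    [DecidableRel G.Adj] (w u v : V) : ℕ :=
  ((G.finsetWalkLength (G.dist u v) u v).filter fun p => w ∈ p.support ∧ w ≠ u ∧ w ≠ v).card

/-- Betweenness centrality
`bc(w) = (1/2) · Σ_{u ≠ v, u ≠ w, v ≠ w} σ_w(u,v)/σ(u,v)` (sum over ordered pairs). -/
noncomputable def betweenness {V : Type} [Fintype V] [DecidableEq V] (G : SimpleGraph V)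
    [DecidableRel G.Adj] (w : V) : ℚ :=
  (1 / 2) * ∑ u : V, ∑ v : V,
    if u ≠ v ∧ u ≠ w ∧ v ≠ w then (numSPvia G w u v : ℚ) / (numSP G u v : ℚ) else 0


lemma aux_dist {V : Type} [Fintype V] [DecidableEq V]
    (G : SimpleGraph V) [DecidableRel G.Adj] {n k l m : ℕ}
    (hG : G.IsSRGWith n k l m) (hm : 0 < m) {u v : V} (huv : u ≠ v) (h : ¬ G.Adj u v) :
    G.dist u v = 2 := by
  have hc := hG.of_not_adj huv h
  have : 0 < Fintype.card (G.commonNeighbors u v) := by omega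
  obtain ⟨⟨x, hx⟩⟩ := Fintype.card_pos_iff.mp this
  rw [SimpleGraph.mem_commonNeighbors] at hx
  let p : G.Walk u v := .cons hx.1 (.cons hx.2.symm .nil)
  have h1 : G.dist u v ≤ 2 := SimpleGraph.dist_le p
  have h2 : G.dist u v ≠ 1 := fun h' => h (SimpleGraph.dist_eq_one_iff_adj.mp h')
  have h3 : 0 < G.dist u v := SimpleGraph.Reachable.pos_dist_of_ne ⟨p⟩ huv
  omega

lemma aux_numSP {V : Type} [Fintype V] [DecidableEq V]
    (G : SimpleGraph V) [DecidableRel G.Adj] {n k l m : ℕ}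
    (hG : G.IsSRGWith n k l m) (hm : 0 < m) {u v : V} (huv : u ≠ v) (h : ¬ G.Adj u v) :
    numSP G u v = m := by
  rw [numSP, aux_dist G hG hm huv h, ← hG.of_not_adj huv h,
    ← Fintype.card_congr (G.walkLengthTwoEquivCommonNeighbors u v)]
  symm
  apply Fintype.card_of_subtype
  intro p
  exact SimpleGraph.mem_finsetWalkLength_iff

lemma aux_via_adj {V : Type} [Fintype V] [DecidableEq V]
    (G : SimpleGraph V) [DecidableRel G.Adj] {u v w : V} (h : G.Adj u v) :
    numSPvia G w u v = 0 := by
  rw [numSPvia, SimpleGraph.dist_eq_one_iff_adj.mpr h, Finset.card_eq_zero,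
    Finset.filter_eq_empty_iff]
  intro p hp
  rw [SimpleGraph.mem_finsetWalkLength_iff] at hp
  match p, hp with
  | .cons _ .nil, _ => simp; tauto

lemma aux_via {V : Type} [Fintype V] [DecidableEq V]
    (G : SimpleGraph V) [DecidableRel G.Adj] {u v w : V} (hd : G.dist u v = 2) :
    numSPvia G w u v = if G.Adj w u ∧ G.Adj w v then 1 else 0 := by
  rw [numSPvia, hd]
  split_ifs with h
  · rw [Finset.card_eq_one]
    refine ⟨.cons h.1.symm (.cons h.2 .nil), ?_⟩
    ext p
    rw [Finset.mem_filter, SimpleGraph.mem_finsetWalkLength_iff, Finset.mem_singleton]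
    constructor
    · rintro ⟨hp, hs, h1, h2⟩
      match p, hp with
      | .cons (v := x) _ (.cons _ .nil), _ =>
        have : w = x := by simpa [h1, h2] using hs
        subst this
        rfl
    · rintro rfl
      simp [h.1.ne, h.2.ne]
  · rw [Finset.card_eq_zero, Finset.filter_eq_empty_iff]
    rintro p hp ⟨hs, h1, h2⟩
    rw [SimpleGraph.mem_finsetWalkLength_iff] at hp
    match p, hp with
    | .cons (v := x) a (.cons b .nil), _ =>
      have : w = x := by simpa [h1, h2] using hs
      subst this
      exact h ⟨a.symm, b⟩

lemma aux_count {V : Type} [Fintype V] [DecidableEq V]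
    (G : SimpleGraph V) [DecidableRel G.Adj] {n k l m : ℕ}
    (hG : G.IsSRGWith n k l m) {u w : V} (h : G.Adj w u) :
    (Finset.univ.filter fun v => G.Adj w v ∧ u ≠ v ∧ ¬ G.Adj u v).card = k - l - 1 := by
  have h1 : (G.neighborFinset w).card = k := hG.regular w
  have h2 : (Finset.univ.filter fun v => G.Adj w v ∧ G.Adj u v).card = l := by
    rw [← hG.of_adj w u h]
    symm
    apply Fintype.card_of_subtype
    intro x
    simp [SimpleGraph.mem_commonNeighbors]
  have h3 : G.neighborFinset w = insert u
      ((Finset.univ.filter fun v => G.Adj w v ∧ G.Adj u v) ∪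
      (Finset.univ.filter fun v => G.Adj w v ∧ u ≠ v ∧ ¬ G.Adj u v)) := by
    ext x
    simp only [SimpleGraph.mem_neighborFinset, Finset.mem_insert, Finset.mem_union,
      Finset.mem_filter, Finset.mem_univ, true_and]
    by_cases hx : x = u
    · subst hx; simp [h]
    · have : u ≠ x := fun e => hx e.symm
      tauto
  rw [h3, Finset.card_insert_of_notMem (by simp), Finset.card_union_of_disjoint, h2] at h1
  · omega
  · rw [Finset.disjoint_left]
    intro x
    simp only [Finset.mem_filter, Finset.mem_univ, true_and]
    tauto

lemma aux_betw {V : Type} [Fintype V] [DecidableEq V]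
    (G : SimpleGraph V) [DecidableRel G.Adj] {n k l m : ℕ}
    (hG : G.IsSRGWith n k l m) (hm : 0 < m) (w : V) :
    2 * betweenness G w = ((n - k - 1 : ℕ) : ℚ) := by
  have hn : 0 < n := by rw [← hG.card]; exact Fintype.card_pos_iff.mpr ⟨w⟩
  have hp := SimpleGraph.IsSRGWith.param_eq G hG hn
  have hm' : (m : ℚ) ≠ 0 := by positivity
  have key : ∀ u : V, (∑ v : V,
      if u ≠ v ∧ u ≠ w ∧ v ≠ w then (numSPvia G w u v : ℚ) / (numSP G u v : ℚ) else 0)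
      = if G.Adj w u then ((k - l - 1 : ℕ) : ℚ) / m else 0 := by
    intro u
    have : ∀ v : V, (if u ≠ v ∧ u ≠ w ∧ v ≠ w then
        (numSPvia G w u v : ℚ) / (numSP G u v : ℚ) else 0) =
        if G.Adj w u then (if G.Adj w v ∧ u ≠ v ∧ ¬ G.Adj u v then (1 : ℚ) / m else 0) else 0 := by
      intro v
      by_cases huv : u = v
      · simp [huv]
      by_cases ha : G.Adj u v
      · simp [aux_via_adj G ha, ha]
      · rw [aux_via G (aux_dist G hG hm huv ha), aux_numSP G hG hm huv ha]
        by_cases h1 : G.Adj w u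
        · by_cases h2 : G.Adj w v
          · simp [huv, ha, h1, h2, h1.ne', h2.ne']
          · simp [h2]
        · simp [h1]
    rw [Finset.sum_congr rfl fun v _ => this v]
    split_ifs with h
    · rw [← Finset.sum_filter, Finset.sum_const, aux_count G hG h, nsmul_eq_mul, mul_one_div]
    · simp
  rw [betweenness, Finset.sum_congr rfl fun u _ => key u, ← Finset.sum_filter, Finset.sum_const,
    nsmul_eq_mul]
  have h1 : (Finset.univ.filter fun u => G.Adj w u).card = k := by
    rw [← G.neighborFinset_eq_filter]; exact hG.regular w
  rw [h1]
  have hp' : (k : ℚ) * ((k - l - 1 : ℕ) : ℚ) = ((n - k - 1 : ℕ) : ℚ) * m := by exact_mod_cast hp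
  field_simp
  linarith

lemma aux_sum {V : Type} [Fintype V] [DecidableEq V]
    (G : SimpleGraph V) [DecidableRel G.Adj] {n k l m : ℕ}
    (hG : G.IsSRGWith n k l m) (hm : 0 < m) (w : V) :
    (∑ v : V, (G.dist w v : ℚ)) = (G.degree w : ℚ) + 2 * ((n - k - 1 : ℕ) : ℚ) := by
  have h1 : ∀ v, (G.dist w v : ℚ) = (if G.Adj w v then 1 else 0) +
      2 * (if Gᶜ.Adj w v then 1 else 0) := by
    intro v
    by_cases hv : w = v
    · simp [hv]
    by_cases ha : G.Adj w v
    · simp [SimpleGraph.dist_eq_one_iff_adj.mpr ha, ha]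
    · simp [aux_dist G hG hm hv ha, ha, hv]
  have h2 : Gᶜ.degree w = n - k - 1 := hG.compl_is_regular w
  rw [Finset.sum_congr rfl fun v _ => h1 v, Finset.sum_add_distrib, ← Finset.mul_sum, ← h2,
    Finset.sum_boole, Finset.sum_boole, ← SimpleGraph.neighborFinset_eq_filter,
    ← SimpleGraph.neighborFinset_eq_filter, SimpleGraph.card_neighborFinset_eq_degree,
    SimpleGraph.card_neighborFinset_eq_degree]

/-- In a strongly regular graph with `0 < μ`, for every vertex `w`:
`Σ_v dist w v = deg(w) + 4·bc(w)` (as rationals), equivalently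
`cc(w) = (n-1)/(deg(w) + 4·bc(w))`. -/
theorem srg_closeness_degree_betweenness {V : Type} [Fintype V] [DecidableEq V]
    (G : SimpleGraph V) [DecidableRel G.Adj] {n k l m : ℕ}
    (hG : G.IsSRGWith n k l m) (hm : 0 < m) :
    ∀ w : V,
      (∑ v : V, (G.dist w v : ℚ)) = (G.degree w : ℚ) + 4 * betweenness G w ∧
      ((n : ℚ) - 1) / (∑ v : V, (G.dist w v : ℚ)) =
        ((n : ℚ) - 1) / ((G.degree w : ℚ) + 4 * betweenness G w) := by
  intro w
  have h : (∑ v : V, (G.dist w v : ℚ)) = (G.degree w : ℚ) + 4 * betweenness G w := by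
    rw [aux_sum G hG hm w, ← aux_betw G hG hm w]
    ring
  exact ⟨h, by rw [h]⟩

end GT
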